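/- For a ring R, the following conditions are equivalent: (1) every finitely generated projective right R-module is CS-Rickart; (2) the free right R-module R^(n) is a CS-Rickart module for every n ∈ ℕ; (3) Mat_n(R) is a right ACS ring for every n ∈ ℕ; (4) for some positive integer m, every finitely generated right ideal of Mat_m(R) has the form P ⊕ S, where P is a projective Mat_m(R)-module and S is a singular right ideal of Mat_m(R); (5) R is a right weakly semihereditary ring; (6) every finitely generated submodule of a projective right R-module has the form P₁ ⊕ … ⊕ Pₙ ⊕ S, where each P₁, …, Pₙ is a projective module isomorphic to a submodule of R_R and S is a singular module. -/

import Mathlib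

namespace CSRickartPaper

section Defs

variable {R : Type*} [Ring R] {M : Type*} [AddCommGroup M] [Module R M]

/-- `N` is an essential submodule of `P` (inside the ambient module `M`):
`N ≤ P` and every submodule of `P` intersecting `N` trivially is zero. -/
def EssentialIn (N P : Submodule R M) : Prop :=
  N ≤ P ∧ ∀ K : Submodule R M, K ≤ P → N ⊓ K = ⊥ → K = ⊥

/-- `N` is a small (superfluous) submodule of `P`. -/
def SmallIn (N P : Submodule R M) : Prop :=
  N ≤ P ∧ ∀ K : Submodule R M, K ≤ P → N ⊔ K = P → K = P

/-- `N` is a direct summand of `M`. -/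
def IsDirectSummand (N : Submodule R M) : Prop :=
  ∃ K : Submodule R M, IsCompl N K

/-- `N` lies above the direct summand `D` of `M`: `M = D ⊕ K`, `D ≤ N` and
`N ⊓ K` is small in `K`. -/
def LiesAbove (N D : Submodule R M) : Prop :=
  ∃ K : Submodule R M, IsCompl D K ∧ D ≤ N ∧ SmallIn (N ⊓ K) K

/-- `N` lies above a direct summand of `M`. -/
def LiesAboveSummand (N : Submodule R M) : Prop :=
  ∃ D : Submodule R M, LiesAbove N D

end Defs

section ModuleDefs

variable (R : Type*) [Ring R] (M : Type*) [AddCommGroup M] [Module R M]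

/-- `M` is a CS-Rickart module: the kernel of every endomorphism is essential
in a direct summand `eM`, `e` an idempotent endomorphism. -/
def IsCSRickart : Prop :=
  ∀ φ : Module.End R M, ∃ e : Module.End R M, IsIdempotentElem e ∧
    EssentialIn (LinearMap.ker φ) (LinearMap.range e)

/-- `M` is a d-CS-Rickart module: the image of every endomorphism lies above a
direct summand of `M`. -/
def IsDCSRickart : Prop :=
  ∀ φ : Module.End R M, LiesAboveSummand (LinearMap.range φ)

/-- `M` is a Rickart module. -/
def IsRickart : Prop :=
  ∀ φ : Module.End R M, ∃ e : Module.End R M, IsIdempotentElem e ∧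
    LinearMap.ker φ = LinearMap.range e

/-- `M` is a dual Rickart module. -/
def IsDRickart : Prop :=
  ∀ φ : Module.End R M, ∃ e : Module.End R M, IsIdempotentElem e ∧
    LinearMap.range φ = LinearMap.range e

/-- `M` is a CS (extending) module. -/
def IsCSModule : Prop :=
  ∀ N : Submodule R M, ∃ D : Submodule R M, IsDirectSummand D ∧ EssentialIn N D

/-- `M` is a lifting (d-CS) module. -/
def IsLifting : Prop :=
  ∀ N : Submodule R M, LiesAboveSummand N

/-- `M` is a singular module: the annihilator of every element is an essential
ideal of `R`. -/
def IsSingularModule : Prop :=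
  ∀ m : M, EssentialIn (LinearMap.ker (LinearMap.toSpanSingleton R M m)) (⊤ : Submodule R R)

/-- `M` is uniform: every nonzero submodule is essential. -/
def IsUniformModule : Prop :=
  ∀ N : Submodule R M, N ≠ ⊥ → EssentialIn N (⊤ : Submodule R M)

/-- `M` satisfies the C₂ condition: every submodule isomorphic to a direct
summand is itself a direct summand. -/
def IsC2 : Prop :=
  ∀ N D : Submodule R M, IsDirectSummand D → Nonempty (N ≃ₗ[R] D) → IsDirectSummand N

/-- `M` is K-nonsingular. -/
def IsKNonsingular : Prop :=
  ∀ φ : Module.End R M, ∀ N : Submodule R M, EssentialIn N (⊤ : Submodule R M) →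
    N ≤ LinearMap.ker φ → φ = 0

/-- `M` is T-noncosingular. -/
def IsTNoncosingular : Prop :=
  ∀ φ : Module.End R M, φ ≠ 0 → ¬ SmallIn (LinearMap.range φ) (⊤ : Submodule R M)

/-- `M` is an SIP-CS module. -/
def IsSIPCS : Prop :=
  ∀ A B : Submodule R M, IsDirectSummand A → IsDirectSummand B →
    ∃ D : Submodule R M, IsDirectSummand D ∧ EssentialIn (A ⊓ B) D

/-- `M` is an SSP-d-CS module. -/
def IsSSPdCS : Prop :=
  ∀ A B : Submodule R M, IsDirectSummand A → IsDirectSummand B →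
    LiesAboveSummand (A ⊔ B)

end ModuleDefs

section RelDefs

variable (R : Type*) [Ring R] (M N : Type*) [AddCommGroup M] [Module R M]
  [AddCommGroup N] [Module R N]

/-- `M` is relatively CS-Rickart to `N`. -/
def IsRelCSRickart : Prop :=
  ∀ φ : M →ₗ[R] N, ∃ e : Module.End R M, IsIdempotentElem e ∧
    EssentialIn (LinearMap.ker φ) (LinearMap.range e)

/-- `M` is relatively d-CS-Rickart to `N`. -/
def IsRelDCSRickart : Prop :=
  ∀ φ : M →ₗ[R] N, LiesAboveSummand (LinearMap.range φ)

/-- `N` is `M`-injective. -/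
def IsRelInjective : Prop :=
  ∀ (A : Submodule R M) (f : A →ₗ[R] N), ∃ g : M →ₗ[R] N, ∀ a : A, g a = f a

end RelDefs

section RingDefs

variable (R : Type*) [Ring R]

/-- The annihilator of an element `a` of `R`, as an ideal (kernel of `r ↦ r • a`). -/
def annElem (a : R) : Submodule R R :=
  LinearMap.ker (LinearMap.toSpanSingleton R R a)

/-- The annihilator of a subset `X` of `R`. -/
def annSet (X : Set R) : Submodule R R :=
  ⨅ x ∈ X, annElem R x

/-- The principal ideal generated by `e`, i.e. the image of `r ↦ r • e`. -/
def idealGen (e : R) : Submodule R R :=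
  LinearMap.range (LinearMap.toSpanSingleton R R e)

/-- `R` is an ACS ring: the annihilator of every element is essential in a
direct summand `eR` of `R`. -/
def IsACSRing : Prop :=
  ∀ a : R, ∃ e : R, IsIdempotentElem e ∧ EssentialIn (annElem R a) (idealGen R e)

/-- `R` is an essentially Baer ring. -/
def IsEssentiallyBaer : Prop :=
  ∀ X : Set R, X.Nonempty → ∃ e : R, IsIdempotentElem e ∧
    EssentialIn (annSet R X) (idealGen R e)

/-- The Jacobson radical of the ring `R`. -/
noncomputable def jacRad : Ideal R := Ideal.jacobson (⊥ : Ideal R)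

/-- `R` is semiregular: `R/J(R)` is von Neumann regular and idempotents lift
modulo `J(R)` (stated elementwise). -/
def IsSemiregularRing : Prop :=
  (∀ a : R, ∃ b : R, a - a * b * a ∈ jacRad R) ∧
  (∀ a : R, a - a * a ∈ jacRad R →
    ∃ e : R, IsIdempotentElem e ∧ e - a ∈ jacRad R)

/-- `J(R)` coincides with the singular ideal `Z(R)`. -/
def JacEqSingular : Prop :=
  ∀ a : R, a ∈ jacRad R ↔ EssentialIn (annElem R a) (⊤ : Submodule R R)

end RingDefs

section GenDefs

variable {R : Type*} [Ring R] {M : Type*} [AddCommGroup M] [Module R M]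

/-- A submodule is `n`-generated if it is spanned by at most `n` elements. -/
def NGen (n : ℕ) (N : Submodule R M) : Prop :=
  ∃ f : Fin n → M, Submodule.span R (Set.range f) = N

end GenDefs

end CSRickartPaper

namespace CSRickartPaper

universe u

/-!
A homomorphism from a projective module to a singular one has essential kernel. Hence, for
`φ : M → Q` with `M` projective, `ker φ` is essential in a direct summand of `M` if and only if
`range φ` is the sum of a projective and a singular submodule: a complement of the summand maps
isomorphically onto the projective part and the summand onto the singular part, and conversely,
if `range φ = P ⊕ S`, then `φ⁻¹(S)` is a summand because `M / φ⁻¹(S) ≅ P`. Taking `M = Rⁿ`, the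
CS-Rickart property of free modules becomes the splitting of finitely generated ideals.

Over a weakly semihereditary ring, the kernel of a map from a finitely generated projective
module to a projective module is an intersection of kernels of finitely many functionals
`f₁, …, fₙ`. Intersecting with these one at a time, each `fᵢ` splits off from the current summand
a piece which it embeds into `R`. The pieces are the `Pᵢ` of the decomposition, and what is left
contains the kernel as an essential submodule.

The rings of matrices are handled by the lattice isomorphism between submodules of `Rⁿ` and
one-sided ideals of `Matₙ(R)`, which matches kernels with annihilators, and by
`Matₖ(Matₘ(R)) ≅ Matₖₘ(R)`.

Modules being left modules in Mathlib, right modules over the ring of the paper are modules over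
the opposite ring; accordingly, matrices act on row vectors from the right.
-/

section Essential

variable {R : Type*} [Ring R] {M : Type*} [AddCommGroup M] [Module R M]
  {L N P : Submodule R M}

theorem EssentialIn.refl (N : Submodule R M) : EssentialIn N N :=
  ⟨le_rfl, fun _ hK h => by rwa [inf_eq_right.2 hK] at h⟩

theorem EssentialIn.trans (hLN : EssentialIn L N) (hNP : EssentialIn N P) : EssentialIn L P :=
  ⟨hLN.1.trans hNP.1, fun K hK h => hNP.2 K hK <|
    hLN.2 _ inf_le_left (by rw [← inf_assoc, inf_eq_left.2 hLN.1, h])⟩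

theorem EssentialIn.inf_right (h : EssentialIn N P) (L : Submodule R M) :
    EssentialIn (N ⊓ L) (P ⊓ L) :=
  ⟨inf_le_inf_right _ h.1, fun K hK hNK => h.2 K (hK.trans inf_le_left) <| by
    rwa [inf_assoc, inf_eq_right.2 (hK.trans inf_le_right)] at hNK⟩

theorem EssentialIn.finset_inf_top {ι : Type*} (s : Finset ι) {N : ι → Submodule R M}
    (h : ∀ i ∈ s, EssentialIn (N i) ⊤) : EssentialIn (s.inf N) ⊤ :=
  Finset.inf_induction (p := fun N => EssentialIn N ⊤) (EssentialIn.refl ⊤)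
    (fun A hA B hB => .trans (by simpa using EssentialIn.inf_right (P := ⊤) hA B) hB) h

theorem EssentialIn.comap {Q : Type*} [AddCommGroup Q] [Module R Q] (h : EssentialIn N P)
    (f : Q →ₗ[R] M) : EssentialIn (N.comap f) (P.comap f) := by
  refine ⟨Submodule.comap_mono h.1, fun K hK hNK => ?_⟩
  have map_eq_bot : K.map f = ⊥ := h.2 _ (Submodule.map_le_iff_le_comap.2 hK) <| by
    rw [inf_comm, Submodule.map_inf_eq_map_inf_comap, inf_comm, hNK, Submodule.map_bot]
  have le_comap : K ≤ N.comap f :=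
    Submodule.map_le_iff_le_comap.1 (map_eq_bot.le.trans bot_le)
  rwa [inf_eq_right.2 le_comap] at hNK

theorem EssentialIn.map_of_injective {Q : Type*} [AddCommGroup Q] [Module R Q]
    (h : EssentialIn N P) {f : M →ₗ[R] Q} (hf : Function.Injective f) :
    EssentialIn (N.map f) (P.map f) := by
  refine ⟨Submodule.map_mono h.1, fun K hK hNK => ?_⟩
  obtain ⟨K, rfl⟩ : ∃ L : Submodule R M, L.map f = K :=
    ⟨_, Submodule.map_comap_eq_of_le (hK.trans LinearMap.map_le_range)⟩
  rw [← Submodule.map_inf f hf, ← Submodule.map_bot f] at hNK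
  rw [h.2 K ((Submodule.map_le_map_iff_of_injective hf _ _).1 hK)
    (Submodule.map_injective_of_injective hf hNK), Submodule.map_bot]

theorem EssentialIn.map_orderIso {S Q : Type*} [Ring S] [AddCommGroup Q] [Module S Q]
    (h : EssentialIn N P) (e : Submodule R M ≃o Submodule S Q) : EssentialIn (e N) (e P) := by
  refine ⟨e.monotone h.1, fun K hK hNK => ?_⟩
  obtain ⟨K, rfl⟩ := e.surjective K
  rw [← map_inf, map_eq_bot_iff] at hNK
  rw [h.2 K (e.le_iff_le.1 hK) hNK, map_bot]

end Essential

section Summand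

variable {R : Type*} [Ring R] {M : Type*} [AddCommGroup M] [Module R M]

/-- `N` is essential in a direct summand of the ambient module: the property that the CS-Rickart
condition asks of kernels of endomorphisms and the ACS condition of annihilators of elements. -/
def IsEssentialInSummand (N : Submodule R M) : Prop :=
  ∃ D : Submodule R M, IsDirectSummand D ∧ EssentialIn N D

theorem isDirectSummand_iff_exists_range_eq {D : Submodule R M} :
    IsDirectSummand D ↔ ∃ e : Module.End R M, IsIdempotentElem e ∧ LinearMap.range e = D := by
  constructor
  · rintro ⟨K, hDK⟩
    exact ⟨D.projection K hDK, Submodule.isIdempotentElem_projection hDK,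
      Submodule.range_projection hDK⟩
  · rintro ⟨e, he, rfl⟩
    exact ⟨_, LinearMap.IsIdempotentElem.isCompl he⟩

theorem isEssentialInSummand_iff_exists_isIdempotentElem {N : Submodule R M} :
    IsEssentialInSummand N ↔
      ∃ e : Module.End R M, IsIdempotentElem e ∧ EssentialIn N (LinearMap.range e) := by
  constructor
  · rintro ⟨D, hD, hND⟩
    obtain ⟨e, he, rfl⟩ := isDirectSummand_iff_exists_range_eq.1 hD
    exact ⟨e, he, hND⟩
  · rintro ⟨e, he, hNe⟩
    exact ⟨_, isDirectSummand_iff_exists_range_eq.2 ⟨e, he, rfl⟩, hNe⟩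

theorem isCSRickart_iff :
    IsCSRickart R M ↔ ∀ φ : Module.End R M, IsEssentialInSummand (LinearMap.ker φ) :=
  forall_congr' fun _ => isEssentialInSummand_iff_exists_isIdempotentElem.symm

theorem isACSRing_iff : IsACSRing R ↔ ∀ a : R, IsEssentialInSummand (annElem R a) := by
  refine forall_congr' fun a => Iff.trans ?_ isEssentialInSummand_iff_exists_isIdempotentElem.symm
  constructor
  · rintro ⟨e, he, h⟩
    exact ⟨_, LinearMap.toSpanSingleton_isIdempotentElem_iff.2 he, h⟩
  · rintro ⟨e, he, h⟩
    obtain ⟨e, rfl⟩ : ∃ a : R, LinearMap.toSpanSingleton R R a = e := ⟨e 1, by ext; simp⟩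
    exact ⟨e, LinearMap.toSpanSingleton_isIdempotentElem_iff.1 he, h⟩

theorem IsDirectSummand.map_orderIso {S Q : Type*} [Ring S] [AddCommGroup Q] [Module S Q]
    {D : Submodule R M} (hD : IsDirectSummand D)
    (e : Submodule R M ≃o Submodule S Q) : IsDirectSummand (e D) :=
  let ⟨K, hDK⟩ := hD
  ⟨e K, e.isCompl hDK⟩

theorem isEssentialInSummand_map_orderIso_iff {S Q : Type*} [Ring S] [AddCommGroup Q] [Module S Q]
    (e : Submodule R M ≃o Submodule S Q) {N : Submodule R M} :
    IsEssentialInSummand (e N) ↔ IsEssentialInSummand N := by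
  constructor
  · rintro ⟨D, hD, hND⟩
    exact ⟨_, hD.map_orderIso e.symm, by
      simpa only [OrderIso.symm_apply_apply] using hND.map_orderIso e.symm⟩
  · rintro ⟨D, hD, hND⟩
    exact ⟨_, hD.map_orderIso e, hND.map_orderIso e⟩

theorem IsDirectSummand.projective [Module.Projective R M] {D : Submodule R M}
    (hD : IsDirectSummand D) : Module.Projective R D := by
  obtain ⟨K, hDK⟩ := hD
  exact .of_split D.subtype (D.projectionOnto K hDK) (Submodule.projectionOnto_comp_subtype hDK)

theorem IsDirectSummand.finite [Module.Finite R M] {D : Submodule R M}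
    (hD : IsDirectSummand D) : Module.Finite R D := by
  obtain ⟨K, hDK⟩ := hD
  exact .of_surjective (D.projectionOnto K hDK) (Submodule.projectionOnto_surjective hDK)

end Summand

section KernelsAndRanges

variable {R : Type*} [Ring R] {M : Type*} [AddCommGroup M] [Module R M]
  {Q : Type*} [AddCommGroup Q] [Module R Q]

theorem IsSingularModule.essentialIn_ker_top [Module.Projective R M] (hQ : IsSingularModule R Q)
    (φ : M →ₗ[R] Q) : EssentialIn (LinearMap.ker φ) ⊤ := by
  classical
  obtain ⟨s, hs⟩ := Module.projective_def.1 (inferInstance : Module.Projective R M)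
  refine ⟨le_top, fun K _ hK => (Submodule.eq_bot_iff K).2 fun x hx => ?_⟩
  -- `A` is the set of `y` all of whose coordinates `s y t`, for `t` in the support of `s x`,
  -- annihilate `φ t`; a multiple `r • x` in `A` is therefore killed by `φ`.
  let A : Submodule R M := (s x).support.inf fun t =>
    (LinearMap.ker (LinearMap.toSpanSingleton R Q (φ t))).comap (Finsupp.lapply t ∘ₗ s)
  have essential_A : EssentialIn A ⊤ :=
    .finset_inf_top _ fun t _ => (hQ (φ t)).comap (Finsupp.lapply t ∘ₗ s)
  have inf_span_le_ker : A ⊓ R ∙ x ≤ LinearMap.ker φ := by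
    rintro y ⟨hyA, hyx⟩
    obtain ⟨r, rfl⟩ := Submodule.mem_span_singleton.1 hyx
    rw [LinearMap.mem_ker, ← hs (r • x), Finsupp.apply_linearCombination,
      Finsupp.linearCombination_apply]
    refine Finset.sum_eq_zero fun t ht => ?_
    have ht' : t ∈ (s x).support := Finsupp.support_smul (map_smul s r x ▸ ht)
    exact (Submodule.mem_finsetInf.1 hyA) t ht'
  have disjoint_A : A ⊓ R ∙ x = ⊥ := le_bot_iff.1 <| hK ▸
    le_inf inf_span_le_ker (inf_le_right.trans (by simpa using hx))
  simpa using essential_A.2 _ le_top disjoint_A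

theorem EssentialIn.isSingularModule_map {φ : M →ₗ[R] Q} {A : Submodule R M}
    (h : EssentialIn (LinearMap.ker φ) A) : IsSingularModule R (A.map φ) := by
  rintro ⟨_, a, ha, rfl⟩
  convert h.comap (LinearMap.toSpanSingleton R M a) using 1
  · ext r
    simp [Subtype.ext_iff]
  · exact (Submodule.eq_top_iff'.2 fun r => A.smul_mem r ha).symm

theorem disjoint_map_of_disjoint_sup_ker {φ : M →ₗ[R] Q} {A C : Submodule R M}
    (h : Disjoint A (C ⊔ LinearMap.ker φ)) : Disjoint (A.map φ) (C.map φ) := by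
  rw [disjoint_iff, Submodule.map_inf_eq_map_inf_comap, Submodule.comap_map_eq, h.eq_bot,
    Submodule.map_bot]

theorem nonempty_linearEquiv_map_of_disjoint_ker {φ : M →ₗ[R] Q} {A : Submodule R M}
    (h : Disjoint A (LinearMap.ker φ)) : Nonempty (A ≃ₗ[R] A.map φ) := by
  rw [← LinearMap.range_domRestrict]
  exact ⟨.ofInjective _ (LinearMap.injective_domRestrict_iff.2 h)⟩

theorem isDirectSummand_ker_of_projective_range (φ : M →ₗ[R] Q)
    [Module.Projective R (LinearMap.range φ)] : IsDirectSummand (LinearMap.ker φ) := by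
  obtain ⟨g, hg⟩ := Module.projective_lifting_property φ.rangeRestrict LinearMap.id
    φ.surjective_rangeRestrict
  have ker_eq : LinearMap.ker (g ∘ₗ φ.rangeRestrict) = LinearMap.ker φ := by
    rw [LinearMap.ker_comp_of_ker_eq_bot _ (LinearMap.ker_eq_bot_of_inverse hg),
      LinearMap.ker_rangeRestrict]
  have idempotent : IsIdempotentElem (M := Module.End R M) (g ∘ₗ φ.rangeRestrict) :=
    LinearMap.ext fun x => congrArg g (LinearMap.congr_fun hg (φ.rangeRestrict x))
  exact ker_eq ▸ ⟨_, (LinearMap.IsIdempotentElem.isCompl idempotent).symm⟩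

/-- `N` is the internal direct sum of a projective and a singular submodule. -/
def IsProjectiveSupSingular (N : Submodule R M) : Prop :=
  ∃ P S : Submodule R M, Module.Projective R P ∧ IsSingularModule R S ∧ P ⊓ S = ⊥ ∧ P ⊔ S = N

theorem IsEssentialInSummand.isProjectiveSupSingular_range [Module.Projective R M]
    {φ : M →ₗ[R] Q} (h : IsEssentialInSummand (LinearMap.ker φ)) :
    IsProjectiveSupSingular (LinearMap.range φ) := by
  obtain ⟨D, ⟨K, hDK⟩, hker⟩ := h
  have projective_K : Module.Projective R K := IsDirectSummand.projective ⟨D, hDK.symm⟩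
  obtain ⟨e⟩ := nonempty_linearEquiv_map_of_disjoint_ker (hDK.disjoint.symm.mono_right hker.1)
  refine ⟨K.map φ, D.map φ, .of_equiv e, hker.isSingularModule_map, ?_, ?_⟩
  · exact (disjoint_map_of_disjoint_sup_ker
      (by rw [sup_eq_left.2 hker.1]; exact hDK.disjoint.symm)).eq_bot
  · rw [← Submodule.map_sup, sup_comm, hDK.sup_eq_top, Submodule.map_top]

theorem IsProjectiveSupSingular.isEssentialInSummand_ker [Module.Projective R M]
    {φ : M →ₗ[R] Q} (h : IsProjectiveSupSingular (LinearMap.range φ)) :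
    IsEssentialInSummand (LinearMap.ker φ) := by
  obtain ⟨P, S, hP, hS, hPS, hrange⟩ := h
  have range_mkQ : LinearMap.range (S.mkQ ∘ₗ φ) = P.map S.mkQ := by
    rw [LinearMap.range_comp, ← hrange, Submodule.map_sup, Submodule.mkQ_map_self, sup_bot_eq]
  obtain ⟨e⟩ := nonempty_linearEquiv_map_of_disjoint_ker (φ := S.mkQ) (A := P)
    (by rw [Submodule.ker_mkQ, disjoint_iff, hPS])
  have projective_range : Module.Projective R (LinearMap.range (S.mkQ ∘ₗ φ)) :=
    range_mkQ ▸ .of_equiv e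
  have summand : IsDirectSummand (S.comap φ) := by
    simpa only [LinearMap.ker_comp, Submodule.ker_mkQ] using
      isDirectSummand_ker_of_projective_range (S.mkQ ∘ₗ φ)
  have := summand.projective
  have essential :=
    (hS.essentialIn_ker_top (φ.restrict (p := S.comap φ) fun _ hx => hx)).map_of_injective
      (S.comap φ).injective_subtype
  rw [LinearMap.ker_restrict, Submodule.map_comap_subtype, Submodule.map_subtype_top,
    inf_eq_right.2 (LinearMap.ker_le_comap φ)] at essential
  exact ⟨_, summand, essential⟩

theorem isEssentialInSummand_ker_iff [Module.Projective R M] {φ : M →ₗ[R] Q} :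
    IsEssentialInSummand (LinearMap.ker φ) ↔ IsProjectiveSupSingular (LinearMap.range φ) :=
  ⟨IsEssentialInSummand.isProjectiveSupSingular_range,
    IsProjectiveSupSingular.isEssentialInSummand_ker⟩

theorem IsCSRickart.isEssentialInSummand_ker_of_surjective_of_injective
    {P : Type*} [AddCommGroup P] [Module R P] [Module.Projective R M] [Module.Projective R P]
    (hM : IsCSRickart R M) {p : M →ₗ[R] P} (hp : Function.Surjective p)
    {i : Q →ₗ[R] M} (hi : Function.Injective i) (φ : P →ₗ[R] Q) :
    IsEssentialInSummand (LinearMap.ker φ) := by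
  have range_eq : LinearMap.range (i ∘ₗ φ ∘ₗ p) = LinearMap.range (i ∘ₗ φ) := by
    rw [← LinearMap.comp_assoc,
      LinearMap.range_comp_of_range_eq_top _ (LinearMap.range_eq_top.2 hp)]
  rw [← LinearMap.ker_comp_of_ker_eq_bot φ (LinearMap.ker_eq_bot.2 hi),
    isEssentialInSummand_ker_iff, ← range_eq, ← isEssentialInSummand_ker_iff]
  exact isCSRickart_iff.1 hM _

end KernelsAndRanges

section Independence

theorem iSupIndep_optionElim_iff {α ι : Type*} [CompleteLattice α] [IsModularLattice α] {a : α}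
    {t : ι → α} :
    iSupIndep (fun o : Option ι => o.elim a t) ↔ iSupIndep t ∧ Disjoint a (⨆ i, t i) := by
  constructor
  · exact fun h => ⟨h.comp (Option.some_injective ι), by simpa [iSup_option] using h none⟩
  rintro ⟨ht, ha⟩ (_ | i)
  · simpa [iSup_option] using ha
  · have disjoint_a : Disjoint (t i ⊔ ⨆ (j) (_ : j ≠ i), t j) a :=
      ha.symm.mono_left (sup_le (le_iSup t i) (iSup₂_le fun j _ => le_iSup t j))
    simpa [iSup_option, sup_comm] using (ht i).disjoint_sup_right_of_disjoint_sup_left disjoint_a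

variable {R : Type*} [Ring R] {M : Type*} [AddCommGroup M] [Module R M]

theorem isDirectSummand_of_iSupIndep {ι : Type*} {N : ι → Submodule R M} (hN : iSupIndep N)
    (htop : ⨆ i, N i = ⊤) (i : ι) : IsDirectSummand (N i) :=
  ⟨_, hN i, codisjoint_iff.2 (by rw [← iSup_split_single, htop])⟩

theorem iSupIndep_map_of_disjoint_ker {Q : Type*} [AddCommGroup Q] [Module R Q] {ι : Type*}
    {N : ι → Submodule R M} (hN : iSupIndep N) {φ : M →ₗ[R] Q}
    (hφ : Disjoint (⨆ i, N i) (LinearMap.ker φ)) : iSupIndep fun i => (N i).map φ := by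
  intro i
  simp only [← Submodule.map_iSup]
  exact disjoint_map_of_disjoint_sup_ker <| (hN i).disjoint_sup_right_of_disjoint_sup_left <|
    hφ.mono_left (sup_le (le_iSup N i) (iSup₂_le fun j _ => le_iSup N j))

theorem exists_isCompl_iSup_essentialIn_iInf {ι : Type*} [Finite ι] (N : ι → Submodule R M)
    (h : ∀ i (D : Submodule R M), IsDirectSummand D →
      ∃ E B : Submodule R M, EssentialIn (N i ⊓ D) E ∧ Disjoint E B ∧ E ⊔ B = D) :
    ∃ (E : Submodule R M) (B : ι → Submodule R M), iSupIndep B ∧ IsCompl E (⨆ i, B i) ∧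
      EssentialIn (⨅ i, N i) E ∧ ∀ i, Disjoint (B i) (N i) := by
  induction ι using Finite.induction_empty_option with
  | of_equiv e ih =>
    obtain ⟨E, B, indep, compl, essential, disj⟩ := ih (N ∘ e) fun i => h (e i)
    refine ⟨E, B ∘ e.symm, indep.comp e.symm.injective, ?_, ?_, fun i => ?_⟩
    · rwa [← e.symm.iSup_comp] at compl
    · rwa [← e.iInf_comp]
    · simpa using disj (e.symm i)
  | h_empty =>
    refine ⟨⊤, fun _ => ⊥, fun i => i.elim, by simpa using isCompl_top_bot, ?_, fun i => i.elim⟩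
    rw [iInf_of_empty]
    exact EssentialIn.refl ⊤
  | h_option ih =>
    obtain ⟨D, B, indep, compl, essential, disj⟩ := ih (N ∘ some) fun i => h (some i)
    obtain ⟨E, A, essential_E, disjoint_EA, rfl⟩ := h none D ⟨_, compl⟩
    have disjoint_A : Disjoint A (⨆ i, B i) := compl.disjoint.mono_left le_sup_right
    refine ⟨E, fun o => o.elim A B, iSupIndep_optionElim_iff.2 ⟨indep, disjoint_A⟩, ?_, ?_, ?_⟩
    · rw [iSup_option]
      exact disjoint_EA.isCompl_sup_right_of_isCompl_sup_left compl
    · rw [iInf_option, inf_comm]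
      exact (inf_comm (E ⊔ A) _ ▸ essential.inf_right (N none)).trans essential_E
    · rintro (_ | i)
      · exact fun K hKA hKN =>
          disjoint_EA ((le_inf hKN (hKA.trans le_sup_right)).trans essential_E.1) hKA
      · exact disj i

end Independence

section WeaklySemihereditary

variable {R : Type*} [Ring R] {M : Type*} [AddCommGroup M] [Module R M]
  {Q : Type*} [AddCommGroup Q] [Module R Q]

theorem exists_disjoint_iInf_ker_of_fg [Module.Projective R Q] {N : Submodule R Q} (hN : N.FG) :
    ∃ (n : ℕ) (f : Fin n → Q →ₗ[R] R), Disjoint N (⨅ i, LinearMap.ker (f i)) := by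
  classical
  obtain ⟨G, rfl⟩ := hN
  obtain ⟨s, hs⟩ := Module.projective_def.1 (inferInstance : Module.Projective R Q)
  let T : Finset Q := G.biUnion fun g => (s g).support
  have le_supported : Submodule.span R (G : Set Q) ≤ (Finsupp.supported R R (T : Set Q)).comap s :=
    Submodule.span_le.2 fun g hg => Finset.subset_biUnion_of_mem (fun g => (s g).support) hg
  refine ⟨T.card, fun i => Finsupp.lapply (T.equivFin.symm i : Q) ∘ₗ s, ?_⟩
  rw [Submodule.disjoint_def]
  intro x hx hker
  have apply_eq_zero (t : Q) : s x t = 0 := by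
    by_cases ht : t ∈ T
    · simpa using (Submodule.mem_iInf _).1 hker (T.equivFin ⟨t, ht⟩)
    · exact (Finsupp.mem_supported' R _).1 (le_supported hx) t ht
  exact hs.injective ((Finsupp.ext apply_eq_zero : s x = 0).trans (map_zero s).symm)

variable (R) in
/-- Right weakly semihereditary rings: finitely generated one-sided ideals (as everywhere in this
development, submodules of `R` as a module over itself) are projective plus singular. -/
def IsWeaklySemihereditary : Prop :=
  ∀ I : Submodule R R, I.FG → IsProjectiveSupSingular I

theorem IsWeaklySemihereditary.exists_essentialIn_ker_inf (hR : IsWeaklySemihereditary R)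
    [Module.Finite R M] [Module.Projective R M] (f : M →ₗ[R] R) {D : Submodule R M}
    (hD : IsDirectSummand D) :
    ∃ E B : Submodule R M, EssentialIn (LinearMap.ker f ⊓ D) E ∧ Disjoint E B ∧ E ⊔ B = D := by
  have := hD.projective
  have := hD.finite
  obtain ⟨E, ⟨B, hEB⟩, essential⟩ :=
    (hR _ (Submodule.fg_range (f.domRestrict D))).isEssentialInSummand_ker
  refine ⟨E.map D.subtype, B.map D.subtype, ?_, ?_, ?_⟩
  · simpa only [LinearMap.ker_domRestrict, Submodule.map_comap_subtype, inf_comm D] using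
      essential.map_of_injective D.injective_subtype
  · exact Submodule.disjoint_map D.injective_subtype hEB.disjoint
  · rw [← Submodule.map_sup, hEB.sup_eq_top, Submodule.map_subtype_top]

theorem IsWeaklySemihereditary.exists_isCompl_iSup_essentialIn_ker
    (hR : IsWeaklySemihereditary R) [Module.Finite R M] [Module.Projective R M]
    [Module.Projective R Q] (φ : M →ₗ[R] Q) :
    ∃ (k : ℕ) (E : Submodule R M) (B : Fin k → Submodule R M), iSupIndep B ∧
      IsCompl E (⨆ i, B i) ∧ EssentialIn (LinearMap.ker φ) E ∧
      ∀ i, ∃ J : Submodule R R, Nonempty (B i ≃ₗ[R] J) := by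
  obtain ⟨k, f, disjoint_range⟩ := exists_disjoint_iInf_ker_of_fg (Submodule.fg_range φ)
  have ker_eq : ⨅ i, LinearMap.ker (f i ∘ₗ φ) = LinearMap.ker φ := by
    simp only [LinearMap.ker_comp, ← Submodule.comap_iInf]
    exact le_antisymm
      (fun x hx => Submodule.disjoint_def.1 disjoint_range _ (φ.mem_range_self x) hx)
      (LinearMap.ker_le_comap φ)
  obtain ⟨E, B, indep, compl, essential, disj⟩ :=
    exists_isCompl_iSup_essentialIn_iInf (fun i => LinearMap.ker (f i ∘ₗ φ))
      fun i _ hD => hR.exists_essentialIn_ker_inf (f i ∘ₗ φ) hD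
  exact ⟨k, E, B, indep, compl, ker_eq ▸ essential,
    fun i => ⟨_, nonempty_linearEquiv_map_of_disjoint_ker (disj i)⟩⟩

theorem IsWeaklySemihereditary.isCSRickart (hR : IsWeaklySemihereditary R)
    [Module.Finite R M] [Module.Projective R M] : IsCSRickart R M :=
  isCSRickart_iff.2 fun φ =>
    let ⟨_, E, _, _, compl, essential, _⟩ := hR.exists_isCompl_iSup_essentialIn_ker φ
    ⟨E, ⟨_, compl⟩, essential⟩

/-- `N` is an internal direct sum of finitely many projective submodules, each isomorphic to an
ideal, and one singular submodule; the index `none` stands for the singular summand. -/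
def HasIdealDecomposition (N : Submodule R M) : Prop :=
  ∃ (k : ℕ) (P : Fin k → Submodule R M) (S : Submodule R M),
    iSupIndep (fun o : Option (Fin k) => o.elim S P) ∧
    ((⨆ i, P i) ⊔ S = N) ∧
    (∀ i, Module.Projective R (P i) ∧ ∃ J : Submodule R R, Nonempty ((P i) ≃ₗ[R] J)) ∧
    IsSingularModule R S

theorem IsWeaklySemihereditary.hasIdealDecomposition_range (hR : IsWeaklySemihereditary R)
    [Module.Finite R M] [Module.Projective R M] [Module.Projective R Q] (φ : M →ₗ[R] Q) :
    HasIdealDecomposition (LinearMap.range φ) := by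
  obtain ⟨k, E, B, indep, compl, essential, ideal⟩ := hR.exists_isCompl_iSup_essentialIn_ker φ
  have iSupIndep_E_B : iSupIndep fun o : Option (Fin k) => o.elim E B :=
    iSupIndep_optionElim_iff.2 ⟨indep, compl.disjoint⟩
  have disjoint_ker : Disjoint (⨆ i, B i) (LinearMap.ker φ) :=
    compl.disjoint.symm.mono_right essential.1
  refine ⟨k, fun i => (B i).map φ, E.map φ, iSupIndep_optionElim_iff.2
    ⟨iSupIndep_map_of_disjoint_ker indep disjoint_ker, ?_⟩, ?_, fun i => ?_,
    essential.isSingularModule_map⟩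
  · rw [← Submodule.map_iSup]
    exact (disjoint_map_of_disjoint_sup_ker
      (by rw [sup_eq_left.2 essential.1]; exact compl.disjoint.symm)).symm
  · rw [← Submodule.map_iSup, ← Submodule.map_sup, sup_comm, compl.sup_eq_top, Submodule.map_top]
  · obtain ⟨e⟩ := nonempty_linearEquiv_map_of_disjoint_ker (disjoint_ker.mono_left (le_iSup B i))
    obtain ⟨J, ⟨f⟩⟩ := ideal i
    have summand : IsDirectSummand (B i) := isDirectSummand_of_iSupIndep iSupIndep_E_B
      (by rw [iSup_option_elim, compl.sup_eq_top]) (some i)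
    have := summand.projective
    exact ⟨.of_equiv e, J, ⟨e.symm.trans f⟩⟩

theorem IsWeaklySemihereditary.hasIdealDecomposition_of_fg (hR : IsWeaklySemihereditary R)
    [Module.Projective R Q] {N : Submodule R Q} (hN : N.FG) : HasIdealDecomposition N := by
  obtain ⟨n, φ, rfl⟩ := (Submodule.fg_iff_exists_fin_linearMap _ _).1 hN
  exact hR.hasIdealDecomposition_range φ

theorem projective_iSup_of_iSupIndep {ι : Type*} {P : ι → Submodule R M} (hP : iSupIndep P)
    [∀ i, Module.Projective R (P i)] : Module.Projective R (⨆ i, P i : Submodule R M) := by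
  classical
  rw [Submodule.iSup_eq_range_dfinsupp_lsum]
  exact .of_equiv (.ofInjective _ hP.dfinsupp_lsum_injective)

theorem HasIdealDecomposition.isProjectiveSupSingular {N : Submodule R M}
    (hN : HasIdealDecomposition N) : IsProjectiveSupSingular N := by
  obtain ⟨k, P, S, indep, sup_eq, hP, hS⟩ := hN
  have _ (i : Fin k) : Module.Projective R (P i) := (hP i).1
  obtain ⟨indep_P, disjoint_S⟩ := iSupIndep_optionElim_iff.1 indep
  exact ⟨⨆ i, P i, S, projective_iSup_of_iSupIndep indep_P, hS, disjoint_S.symm.eq_bot, sup_eq⟩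

theorem isWeaklySemihereditary_of_isCSRickart_pi (h : ∀ n : ℕ, IsCSRickart R (Fin n → R)) :
    IsWeaklySemihereditary R := by
  intro I hI
  obtain ⟨n, f, rfl⟩ := (Submodule.fg_iff_exists_fin_linearMap _ _).1 hI
  -- `R ^ (n + 1)` maps onto `R ^ n` and contains `R`, which `R ^ n` does not when `n = 0`.
  exact ((h (n + 1)).isEssentialInSummand_ker_of_surjective_of_injective
    (LinearMap.funLeft_surjective_of_injective R R _ (Fin.castSucc_injective n))
    (i := LinearMap.single R (fun _ => R) 0) (Pi.single_injective (M := fun _ => R) 0)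
    f).isProjectiveSupSingular_range

theorem isWeaklySemihereditary_iff_isCSRickart_pi :
    IsWeaklySemihereditary R ↔ ∀ n : ℕ, IsCSRickart R (Fin n → R) :=
  ⟨fun h _ => h.isCSRickart, isWeaklySemihereditary_of_isCSRickart_pi⟩

end WeaklySemihereditary

section MatrixRings

variable {R : Type*} [Ring R] {ι : Type*} [Fintype ι] [DecidableEq ι]

/-- The lattice isomorphism between submodules of `ι → R` and one-sided ideals of the matrix ring,
sending `N` to the ideal of matrices all of whose rows lie in `N`. -/
def rowsOrderIso : Submodule R (ι → R) ≃o Submodule (Matrix ι ι R) (Matrix ι ι R) :=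
  Equiv.toOrderIso
    { toFun N :=
        { carrier := {X | ∀ i, X i ∈ N}
          add_mem' hX hY i := N.add_mem (hX i) (hY i)
          zero_mem' _ := N.zero_mem
          smul_mem' A X hX i := by
            rw [smul_eq_mul, Matrix.mul_apply_eq_vecMul, Matrix.vecMul_eq_sum]
            exact N.sum_mem fun j _ => N.smul_mem _ (hX j) }
      invFun K :=
        { carrier := {x | ∀ c, Matrix.vecMulVec c x ∈ K}
          add_mem' hx hy c := by simpa only [Matrix.vecMulVec_add] using K.add_mem (hx c) (hy c)
          zero_mem' c := by simp
          smul_mem' r x hx c := by simpa only [Matrix.vecMulVec_smul'] using hx _ }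
      left_inv N := by
        ext x
        refine ⟨fun hx => ?_, fun hx c i => N.smul_mem (c i) hx⟩
        cases isEmpty_or_nonempty ι with
        | inl _ => simp [Subsingleton.elim x 0]
        | inr h => exact one_smul R x ▸ (hx 1 h.some : (1 : R) • x ∈ N)
      right_inv K := by
        ext X
        refine ⟨fun hX => ?_, fun hX i c => ?_⟩
        · have eq_sum : X = ∑ i, Matrix.vecMulVec (Pi.single i 1) (X i) := by
            ext j k
            simp [Matrix.sum_apply, Matrix.vecMulVec_apply, Pi.single_apply]
          exact eq_sum ▸ K.sum_mem fun i _ => hX i _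
        · have eq_mul : Matrix.vecMulVec c (X i) = Matrix.vecMulVec c (Pi.single i 1) * X := by
            rw [Matrix.vecMulVec_mul, Matrix.single_one_vecMul]
            rfl
          exact eq_mul ▸ K.smul_mem _ hX }
    (fun _ _ h _ hX i => h (hX i)) (fun _ _ h _ hx c => h (hx c))

theorem isACSRing_of_ringEquiv {S T : Type*} [Ring S] [Ring T] (f : S ≃+* T) (hT : IsACSRing T) :
    IsACSRing S := by
  rw [isACSRing_iff] at hT ⊢
  intro a
  have annElem_eq : annElem S a = f.idealComapOrderIso (annElem T (f a)) := by
    ext x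
    simp [annElem, RingEquiv.idealComapOrderIso, ← map_mul]
  rw [annElem_eq]
  exact (isEssentialInSummand_map_orderIso_iff f.idealComapOrderIso).2 (hT (f a))

variable (R ι) in
theorem isACSRing_matrix_iff : IsACSRing (Matrix ι ι R) ↔ IsCSRickart R (ι → R) := by
  rw [isACSRing_iff, isCSRickart_iff,
    ← (Matrix.toLinearMapRight' (R := R) (m := ι) (n := ι)).toEquiv.forall_congr_right]
  refine forall_congr' fun A => ?_
  have annElem_eq : annElem (Matrix ι ι R) A =
      rowsOrderIso (LinearMap.ker (Matrix.toLinearMapRight' A)) := by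
    ext X
    exact Matrix.ext_iff.symm.trans (forall_congr' fun i => funext_iff.symm)
  rw [annElem_eq]
  exact isEssentialInSummand_map_orderIso_iff (M := ι → R) (Q := Matrix ι ι R) rowsOrderIso

theorem isCSRickart_pi_matrix_iff {κ : Type*} [Finite κ] :
    IsCSRickart (Matrix ι ι R) (κ → Matrix ι ι R) ↔ IsCSRickart R (κ × ι → R) := by
  classical
  have := Fintype.ofFinite κ
  rw [← isACSRing_matrix_iff, ← isACSRing_matrix_iff]
  exact ⟨isACSRing_of_ringEquiv (Matrix.compRingEquiv κ ι R).symm,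
    isACSRing_of_ringEquiv (Matrix.compRingEquiv κ ι R)⟩

theorem isWeaklySemihereditary_matrix_iff [Nonempty ι] :
    IsWeaklySemihereditary (Matrix ι ι R) ↔ IsWeaklySemihereditary R := by
  simp only [isWeaklySemihereditary_iff_isCSRickart_pi (R := Matrix ι ι R),
    isCSRickart_pi_matrix_iff]
  refine ⟨fun h => ?_, fun h _ => h.isCSRickart⟩
  refine isWeaklySemihereditary_iff_isCSRickart_pi.2 fun n => isCSRickart_iff.2 fun φ => ?_
  let i₀ : ι := Classical.arbitrary ι
  exact (h n).isEssentialInSummand_ker_of_surjective_of_injective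
    (LinearMap.funLeft_surjective_of_injective R R _ (Prod.mk_left_injective i₀))
    (LinearMap.funLeft_injective_of_surjective R R _ Prod.fst_surjective) φ

end MatrixRings

/-- Characterizations of right weakly semihereditary rings (Theorem 4.4). -/
theorem weakly_semihereditary_tfae {R : Type u} [Ring R] :
    List.TFAE
      [ ∀ (P : Type u) [AddCommGroup P] [Module R P],
          Module.Finite R P → Module.Projective R P → IsCSRickart R P,
        ∀ n : ℕ, IsCSRickart R (Fin n → R),
        ∀ n : ℕ, IsACSRing (Matrix (Fin n) (Fin n) R),
        ∃ m : ℕ, 0 < m ∧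
          ∀ I : Submodule (Matrix (Fin m) (Fin m) R) (Matrix (Fin m) (Fin m) R),
            I.FG → ∃ P S : Submodule (Matrix (Fin m) (Fin m) R) (Matrix (Fin m) (Fin m) R),
              Module.Projective (Matrix (Fin m) (Fin m) R) P ∧
              IsSingularModule (Matrix (Fin m) (Fin m) R) S ∧ P ⊓ S = ⊥ ∧ P ⊔ S = I,
        ∀ I : Submodule R R, I.FG →
          ∃ P S : Submodule R R, Module.Projective R P ∧ IsSingularModule R S ∧
            P ⊓ S = ⊥ ∧ P ⊔ S = I,
        ∀ (Q : Type u) [AddCommGroup Q] [Module R Q], Module.Projective R Q →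
          ∀ N : Submodule R Q, N.FG →
            ∃ (k : ℕ) (P : Fin k → Submodule R Q) (S : Submodule R Q),
              iSupIndep (fun o : Option (Fin k) => o.elim S P) ∧
              ((⨆ i, P i) ⊔ S = N) ∧
              (∀ i, Module.Projective R (P i) ∧
                ∃ J : Submodule R R, Nonempty ((P i) ≃ₗ[R] J)) ∧
              IsSingularModule R S ] := by
  tfae_have 1 → 2 := fun h n => h _ inferInstance inferInstance
  tfae_have 2 ↔ 3 := forall_congr' fun n => (isACSRing_matrix_iff R (Fin n)).symm
  tfae_have 2 ↔ 5 := isWeaklySemihereditary_iff_isCSRickart_pi.symm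
  tfae_have 5 → 1 := fun h P _ _ _ _ => IsWeaklySemihereditary.isCSRickart h
  tfae_have 5 → 4 := fun h => ⟨1, one_pos, isWeaklySemihereditary_matrix_iff.2 h⟩
  tfae_have 4 → 5 := fun ⟨m, hm, h⟩ =>
    have : Nonempty (Fin m) := ⟨⟨0, hm⟩⟩
    isWeaklySemihereditary_matrix_iff.1 h
  tfae_have 5 → 6 := fun h Q _ _ _ N hN =>
    IsWeaklySemihereditary.hasIdealDecomposition_of_fg h hN
  tfae_have 6 → 5 := fun h I hI =>
    HasIdealDecomposition.isProjectiveSupSingular (h R inferInstance I hI)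
  tfae_finish

end CSRickartPaper
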